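/- Let (W,S) be a Coxeter system, let w, u, v ∈ W and s ∈ S be such that w = uv and R(ws) = R(w). Then there exists a unique factorization ws = u′v′ such that exactly one of the following holds: (1) u′ = u, v⁻¹v′ ∈ S, and R(v′) = R(v); or (2) v′ = v, u⁻¹u′ ∈ S, and R(u′) = R(u). -/

import Mathlib

/-- The recoil set of `w`: the set of simple reflections `s` with `ℓ(sw) = ℓ(w) − 1`. -/
def coxRecoil {B W : Type*} [Group W] {M : CoxeterMatrix B} (cs : CoxeterSystem M W)
    (w : W) : Set W :=
  {s | s ∈ Set.range cs.simple ∧ cs.length (s * w) + 1 = cs.length w}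

/-!
Right multiplication by a simple reflection `s` changes the set of left inversions of `w` only in
the reflection `w s w⁻¹`. Hence `R(ws) = R(w)` unless `w s w⁻¹` is a simple reflection `r`; in that
case `ws = rw`, and `r` lies in exactly one of `R(ws)` and `R(w)`. Now let `w = uv`. If
`R(vs) = R(v)`, then `s` is absorbed by the right factor. Otherwise `vs = rv` with `r` simple, so
`ws = (ur)v`. Here `R(ur) = R(u)`, since `ur = qu` with `q` simple would give `ws = qw`.

The statement on inversions is the one behind the strong exchange property: `W` acts on `W × ℤ/2`
by conjugation on the first factor, where a simple reflection `s` moreover flips the sign of the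
pairs `(s, e)`. For a reflection `t`, the sign of the image of `(t, 0)` under `w` tells whether `t`
is a right inversion of `w`. That the braid relations hold for this action comes down to the
inversion sequence of `(s_i s_j)^(M i j)` being a sequence of length `M i j` written twice.
-/

section

open CoxeterSystem (alternatingWord)

variable {B W : Type*}

theorem reverse_alternatingWord_two_mul (i j : B) (p : ℕ) :
    (alternatingWord i j (2 * p)).reverse = alternatingWord j i (2 * p) := by
  induction p with
  | zero => rfl
  | succ p ih =>
    rw [mul_add_one, CoxeterSystem.alternatingWord_succ', CoxeterSystem.alternatingWord_succ']
    simp [CoxeterSystem.alternatingWord_succ, ih, parity_simps]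

theorem prod_map_alternatingWord_two_mul {G : Type*} [Monoid G] (f : B → G) (i j : B) (p : ℕ) :
    ((alternatingWord i j (2 * p)).map f).prod = (f i * f j) ^ p := by
  induction p with
  | zero => simp [alternatingWord]
  | succ p ih => simp [mul_add_one, CoxeterSystem.alternatingWord_succ, ih, pow_succ]

variable [Group W] {M : CoxeterMatrix B} (cs : CoxeterSystem M W)

theorem leftInvSeq_alternatingWord_two_mul (i j : B) (p : ℕ) :
    cs.leftInvSeq (alternatingWord i j (2 * p)) =
      (List.range (2 * p)).map fun k ↦ cs.simple i * (cs.simple j * cs.simple i) ^ k := by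
  refine List.ext_getElem (by simp) fun k hk _ ↦ ?_
  rw [cs.getElem_leftInvSeq_alternatingWord i j p k (by simpa using hk),
    cs.prod_alternatingWord_eq_mul_pow]
  simp [Nat.mul_add_div]

open Classical in
theorem even_count_leftInvSeq_alternatingWord (i j : B) (t : W) :
    Even ((cs.leftInvSeq (alternatingWord i j (2 * M i j))).count t) := by
  have periodic (k : ℕ) :
      (cs.simple j * cs.simple i) ^ (M i j + k) = (cs.simple j * cs.simple i) ^ k := by
    rw [pow_add, cs.simple_mul_simple_pow', one_mul]
  rw [leftInvSeq_alternatingWord_two_mul, two_mul, List.range_add, List.map_append, List.map_map,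
    List.count_append]
  simp only [Function.comp_def, periodic, Even.add_self]

open Classical in
/-- The action of the simple reflection `s i` on the set of signed reflections, with signs in
`ZMod 2`: conjugation by `s i`, which in addition flips the sign of `s i` itself. For convenience
all of `W` is allowed as the first component, rather than the reflections only. -/
noncomputable def signedConjSimple (i : B) : Function.End (W × ZMod 2) :=
  fun p ↦ (cs.simple i * p.1 * cs.simple i, p.2 + if p.1 = cs.simple i then 1 else 0)

open Classical in
theorem prod_map_signedConjSimple_apply (ω : List B) (t : W) (e : ZMod 2) :
    (ω.map (signedConjSimple cs)).prod (t, e) =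
      (cs.wordProd ω * t * (cs.wordProd ω)⁻¹, e + ((cs.rightInvSeq ω).count t : ZMod 2)) := by
  induction ω with
  | nil =>
    change (t, e) = _
    simp
  | cons i ω ih =>
    have flips_iff : cs.wordProd ω * t * (cs.wordProd ω)⁻¹ = cs.simple i ↔
        (cs.wordProd ω)⁻¹ * cs.simple i * cs.wordProd ω = t := by
      rw [mul_inv_eq_iff_eq_mul, ← eq_inv_mul_iff_mul_eq, mul_assoc, eq_comm]
    rw [List.map_cons, List.prod_cons]
    change signedConjSimple cs i ((ω.map (signedConjSimple cs)).prod (t, e)) = _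
    rw [ih]
    ext
    · simp [signedConjSimple, cs.wordProd_cons, mul_assoc]
    · simp [signedConjSimple, CoxeterSystem.rightInvSeq, List.count_cons, flips_iff, add_assoc]

theorem isLiftable_signedConjSimple : M.IsLiftable (signedConjSimple cs) := by
  classical
  intro i j
  have wordProd_eq_one : cs.wordProd (alternatingWord i j (2 * M i j)) = 1 := by
    rw [CoxeterSystem.wordProd, prod_map_alternatingWord_two_mul, cs.simple_mul_simple_pow]
  have count_eq_zero (t : W) :
      ((cs.rightInvSeq (alternatingWord i j (2 * M i j))).count t : ZMod 2) = 0 := by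
    rw [← reverse_alternatingWord_two_mul, cs.rightInvSeq_reverse, List.count_reverse,
      M.symmetric i j]
    exact (even_count_leftInvSeq_alternatingWord cs j i t).natCast_zmod_two
  funext ⟨t, e⟩
  change _ = (t, e)
  rw [← prod_map_alternatingWord_two_mul, prod_map_signedConjSimple_apply, wordProd_eq_one,
    count_eq_zero, one_mul, inv_one, mul_one, add_zero]

/-- The action of `W` on signed reflections that extends `signedConjSimple`. -/
noncomputable def signedConj : W →* Function.End (W × ZMod 2) :=
  cs.lift ⟨signedConjSimple cs, isLiftable_signedConjSimple cs⟩

theorem signedConj_simple (i : B) : signedConj cs (cs.simple i) = signedConjSimple cs i :=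
  cs.lift_apply_simple (isLiftable_signedConjSimple cs) i

theorem signedConj_mul_apply (w₁ w₂ : W) (p : W × ZMod 2) :
    signedConj cs (w₁ * w₂) p = signedConj cs w₁ (signedConj cs w₂ p) := by
  rw [map_mul]
  rfl

open Classical in
theorem signedConj_wordProd_apply (ω : List B) (t : W) (e : ZMod 2) :
    signedConj cs (cs.wordProd ω) (t, e) =
      (cs.wordProd ω * t * (cs.wordProd ω)⁻¹, e + ((cs.rightInvSeq ω).count t : ZMod 2)) := by
  rw [← prod_map_signedConjSimple_apply, CoxeterSystem.wordProd, map_list_prod, List.map_map]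
  simp only [Function.comp_def, signedConj_simple]

theorem signedConj_apply_fst (w : W) (p : W × ZMod 2) : (signedConj cs w p).1 = w * p.1 * w⁻¹ := by
  obtain ⟨ω, rfl⟩ := cs.wordProd_surjective w
  rw [← Prod.mk.eta (p := p), signedConj_wordProd_apply]

theorem signedConj_apply_add (w t : W) (e e' : ZMod 2) :
    signedConj cs w (t, e + e') =
      ((signedConj cs w (t, e)).1, (signedConj cs w (t, e)).2 + e') := by
  obtain ⟨ω, rfl⟩ := cs.wordProd_surjective w
  simp only [signedConj_wordProd_apply, add_right_comm]

theorem signedConj_isReflection_apply {t : W} (ht : cs.IsReflection t) (e : ZMod 2) :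
    signedConj cs t (t, e) = (t, e + 1) := by
  obtain ⟨x, i, ht_eq⟩ := ht
  obtain ⟨e', he'⟩ : ∃ e', signedConj cs x⁻¹ (t, e) = (cs.simple i, e') :=
    ⟨_, Prod.ext (by simp [signedConj_apply_fst, ht_eq, mul_assoc]) rfl⟩
  have hx : signedConj cs x (cs.simple i, e') = (t, e) := by
    rw [← he', ← signedConj_mul_apply, mul_inv_cancel, map_one]
    rfl
  calc signedConj cs t (t, e)
    _ = signedConj cs x (signedConj cs (cs.simple i) (signedConj cs x⁻¹ (t, e))) := by
      rw [← signedConj_mul_apply, ← signedConj_mul_apply, ← ht_eq]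
    _ = signedConj cs x (cs.simple i, e' + 1) := by
      simp [he', signedConj_simple, signedConjSimple]
    _ = (t, e + 1) := by
      rw [signedConj_apply_add, hx]

theorem isRightInversion_of_signedConj_eq_one {w t : W} (h : (signedConj cs w (t, 0)).2 = 1) :
    cs.IsRightInversion w t := by
  classical
  obtain ⟨ω, hω, rfl⟩ := cs.exists_isReduced w
  refine cs.isRightInversion_of_mem_rightInvSeq hω ?_
  by_contra not_mem
  simp [signedConj_wordProd_apply, List.count_eq_zero_of_not_mem not_mem] at h

theorem isRightInversion_iff_signedConj_eq_one {t : W} (ht : cs.IsReflection t) (w : W) :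
    cs.IsRightInversion w t ↔ (signedConj cs w (t, 0)).2 = 1 := by
  refine ⟨fun h ↦ ?_, isRightInversion_of_signedConj_eq_one cs⟩
  by_contra sign_ne_one
  have sign_eq_zero : (signedConj cs w (t, 0)).2 = 0 := by
    generalize (signedConj cs w (t, 0)).2 = e at sign_ne_one
    decide +revert
  have sign_mul : (signedConj cs (w * t) (t, 0)).2 = 1 := by
    rw [signedConj_mul_apply, signedConj_isReflection_apply cs ht, signedConj_apply_add,
      sign_eq_zero, zero_add]
  exact ht.isRightInversion_mul_left_iff.mp (isRightInversion_of_signedConj_eq_one cs sign_mul) h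

theorem isRightInversion_simple_mul_iff {w t : W} {i : B} (ht : cs.IsReflection t)
    (hne : w * t * w⁻¹ ≠ cs.simple i) :
    cs.IsRightInversion (cs.simple i * w) t ↔ cs.IsRightInversion w t := by
  rw [isRightInversion_iff_signedConj_eq_one cs ht, isRightInversion_iff_signedConj_eq_one cs ht,
    signedConj_mul_apply, signedConj_simple]
  simp [signedConjSimple, signedConj_apply_fst, hne]

theorem isLeftInversion_mul_simple_iff {w t : W} {i : B} (ht : cs.IsReflection t)
    (hne : w * cs.simple i ≠ t * w) :
    cs.IsLeftInversion (w * cs.simple i) t ↔ cs.IsLeftInversion w t := by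
  rw [← cs.isRightInversion_inv_iff, ← cs.isRightInversion_inv_iff, mul_inv_rev, cs.inv_simple]
  refine isRightInversion_simple_mul_iff cs ht fun h ↦ hne ?_
  rw [← h]
  group

theorem simple_mem_coxRecoil_iff {w : W} {i : B} :
    cs.simple i ∈ coxRecoil cs w ↔ cs.IsLeftDescent w i := by
  simp [coxRecoil, cs.isLeftDescent_iff]

theorem coxRecoil_eq_iff {w w' : W} :
    coxRecoil cs w = coxRecoil cs w' ↔ ∀ i, cs.IsLeftDescent w i ↔ cs.IsLeftDescent w' i := by
  simp only [← simple_mem_coxRecoil_iff]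
  refine ⟨fun h i ↦ h ▸ Iff.rfl, fun h ↦ Set.ext fun t ↦ ?_⟩
  by_cases ht : t ∈ Set.range cs.simple
  · obtain ⟨i, rfl⟩ := ht
    exact h i
  · exact iff_of_false (ht ·.1) (ht ·.1)

theorem coxRecoil_mul_simple_eq_iff {w : W} {i : B} :
    coxRecoil cs (w * cs.simple i) = coxRecoil cs w ↔
      ∀ j, w * cs.simple i ≠ cs.simple j * w := by
  rw [coxRecoil_eq_iff]
  constructor
  · intro h j hj
    have descent_iff := h j
    rw [hj, cs.isLeftDescent_iff_not_isLeftDescent_mul, cs.simple_mul_simple_cancel_left]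
      at descent_iff
    exact not_iff_self descent_iff
  · intro h j
    simpa only [cs.isLeftInversion_simple_iff_isLeftDescent] using
      isLeftInversion_mul_simple_iff cs (cs.isReflection_simple j) (h j)

theorem coxRecoil_mul_simple_eq_of_mul_simple_eq {u v : W} {i j : B}
    (hj : v * cs.simple i = cs.simple j * v)
    (hrec : coxRecoil cs (u * v * cs.simple i) = coxRecoil cs (u * v)) :
    coxRecoil cs (u * cs.simple j) = coxRecoil cs u := by
  rw [coxRecoil_mul_simple_eq_iff] at hrec ⊢
  intro k hk
  apply hrec k
  rw [mul_assoc, hj, ← mul_assoc, hk, mul_assoc]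

theorem mul_simple_ne_self (w : W) (i : B) : w * cs.simple i ≠ w :=
  fun h ↦ cs.length_mul_simple_ne w i (congrArg cs.length h)

end

/-- If `w = uv` and `R(ws) = R(w)` then there is a unique factorization `ws = u′v′` for
which exactly one of the two alternatives of Proposition 8 holds. -/
theorem statement11 {B W : Type*} [Group W] {M : CoxeterMatrix B} (cs : CoxeterSystem M W)
    (w u v s : W) (hs : s ∈ Set.range cs.simple) (hfac : w = u * v)
    (hrec : coxRecoil cs (w * s) = coxRecoil cs w) :
    ∃! uv : W × W, uv.1 * uv.2 = w * s ∧
      Xor'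
        (uv.1 = u ∧ v⁻¹ * uv.2 ∈ Set.range cs.simple ∧ coxRecoil cs uv.2 = coxRecoil cs v)
        (uv.2 = v ∧ u⁻¹ * uv.1 ∈ Set.range cs.simple ∧
          coxRecoil cs uv.1 = coxRecoil cs u) := by
  obtain ⟨i, rfl⟩ := hs
  subst hfac
  by_cases hv : coxRecoil cs (v * cs.simple i) = coxRecoil cs v
  · refine ⟨(u, v * cs.simple i), ⟨(mul_assoc ..).symm, .inl ⟨⟨rfl, ⟨i, by simp⟩, hv⟩,
      fun h ↦ mul_simple_ne_self cs v i h.1⟩⟩, ?_⟩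
    rintro ⟨u', v'⟩ ⟨hmul : u' * v' = _, ⟨⟨rfl, -⟩, -⟩ | ⟨⟨rfl, ⟨j, hj⟩, -⟩, -⟩⟩
    · rw [mul_assoc, mul_right_inj] at hmul
      rw [hmul]
    · rw [mul_assoc, ← inv_mul_eq_iff_eq_mul, ← mul_assoc, ← hj] at hmul
      exact absurd hmul.symm ((coxRecoil_mul_simple_eq_iff cs).mp hv j)
  · obtain ⟨j, hj⟩ : ∃ j, v * cs.simple i = cs.simple j * v := by
      simpa [coxRecoil_mul_simple_eq_iff] using hv
    have hu := coxRecoil_mul_simple_eq_of_mul_simple_eq cs hj hrec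
    have hmul_eq : u * v * cs.simple i = u * cs.simple j * v := by rw [mul_assoc, hj, mul_assoc]
    refine ⟨(u * cs.simple j, v), ⟨hmul_eq.symm, .inr ⟨⟨rfl, ⟨j, by simp⟩, hu⟩,
      fun h ↦ mul_simple_ne_self cs u j h.1⟩⟩, ?_⟩
    rintro ⟨u', v'⟩ ⟨hmul : u' * v' = _, ⟨⟨rfl, -, hv'⟩, -⟩ | ⟨⟨rfl, -⟩, -⟩⟩
    · rw [mul_assoc, mul_right_inj] at hmul
      exact absurd (hmul ▸ hv') hv
    · rw [hmul_eq, mul_left_inj] at hmul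
      rw [hmul]
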